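/- Let m, n be positive integers, and for each z ∈ {0,1}^{n+1} let f_z be a measurable probability density function on ℝ^m such that w ↦ max_{z∈{0,1}^{n+1}} f_z(w) is integrable. Define the density f⋆ = 2^{−(n+1)} Σ_{z∈{0,1}^{n+1}} f_z, and for each s ⊆ [n] the density f⋆_s = 2^{−n} Σ_{x∈{0,1}^n} f_{(x, p_s(x))}. Then 2^{−n} Σ_{s⊆[n]} ∫_{ℝ^m} |f⋆(w) − f⋆_s(w)| dw ≤ 2^{−n/2} ∫_{ℝ^m} max_{z∈{0,1}^{n+1}} f_z(w) dw. -/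

import Mathlib

/-!
Write `χ_s(x) = (-1)^{p_s(x)}` and, at a fixed point `w`, `g(x) = (f_{(x,1)}(w) - f_{(x,0)}(w)) / 2`.
Then `f⋆(w) - f⋆_s(w) = 2^{-n} ∑_x χ_s(x) g(x)`, a Fourier coefficient of `g` on `{0,1}^n`.
Parseval (`sum_sq_chi`) together with Cauchy–Schwarz over `s` and `|g| ≤ max_z f_z(w)` bounds
`∑_s |f⋆(w) - f⋆_s(w)|` by `2^{n/2} max_z f_z(w)` (`sum_abs_le`). Integrating this pointwise
bound in `w` gives the theorem.
-/

open Finset MeasureTheory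

/-- The parity function indexed by `s ⊆ [n]` on `{0,1}^n` (encoded by `Bool`):
`p_s(x) = ⊕_{i∈s} x_i`. -/
def parity {n : ℕ} (s : Finset (Fin n)) (x : Fin n → Bool) : Bool :=
  decide (Odd (s.filter fun i => x i = true).card)

/-- The character `χ_s(x) = (-1)^{p_s(x)}`, in product form. -/
def chi {n : ℕ} (s : Finset (Fin n)) (x : Fin n → Bool) : ℝ :=
  ∏ i ∈ s, (if x i = true then (-1 : ℝ) else 1)

lemma chi_eq_parity {n : ℕ} (s : Finset (Fin n)) (x : Fin n → Bool) :
    chi s x = if parity s x = true then -1 else 1 := by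
  unfold chi parity
  rw [Finset.prod_ite]
  simp only [Finset.prod_const, one_pow, mul_one, decide_eq_true_eq]
  split_ifs with h
  · exact h.neg_one_pow
  · exact (Nat.not_odd_iff_even.mp h).neg_one_pow

/-- Orthogonality of the characters in the index `s`: the sum expands
`∏ i, (1 + (-1)^{x_i + y_i})`, which has a zero factor as soon as `x ≠ y`. -/
lemma sum_chi_mul_chi {n : ℕ} (x y : Fin n → Bool) :
    ∑ s : Finset (Fin n), chi s x * chi s y = if x = y then (2 : ℝ) ^ n else 0 := by
  have h : ∑ s : Finset (Fin n), chi s x * chi s y =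
      ∏ i : Fin n, (1 + (if x i = true then (-1 : ℝ) else 1) *
        (if y i = true then (-1 : ℝ) else 1)) := by
    rw [Finset.prod_one_add, Finset.powerset_univ]
    simp only [chi, Finset.prod_mul_distrib]
  rw [h]
  split_ifs with hxy
  · subst hxy
    have h2 : ∀ i : Fin n, (1 + (if x i = true then (-1 : ℝ) else 1) *
        (if x i = true then (-1 : ℝ) else 1)) = 2 := by
      intro i
      split_ifs <;> norm_num
    rw [Finset.prod_congr rfl fun i _ => h2 i]
    simp
  · obtain ⟨i, hi⟩ := Function.ne_iff.mp hxy
    apply Finset.prod_eq_zero (Finset.mem_univ i)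
    cases hx : x i <;> cases hy : y i <;> simp_all

/-- Parseval's identity for the unnormalised Fourier transform on `{0,1}^n`. -/
lemma sum_sq_chi {n : ℕ} (g : (Fin n → Bool) → ℝ) :
    ∑ s : Finset (Fin n), (∑ x, chi s x * g x) ^ 2 = 2 ^ n * ∑ x, g x ^ 2 := by
  calc ∑ s : Finset (Fin n), (∑ x, chi s x * g x) ^ 2
      = ∑ s : Finset (Fin n), ∑ x, ∑ y, (chi s x * chi s y) * (g x * g y) := by
        refine Finset.sum_congr rfl fun s _ => ?_
        rw [sq, Finset.sum_mul_sum]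
        refine Finset.sum_congr rfl fun x _ => Finset.sum_congr rfl fun y _ => ?_
        ring
    _ = ∑ x, ∑ y, (∑ s : Finset (Fin n), chi s x * chi s y) * (g x * g y) := by
        rw [Finset.sum_comm]
        refine Finset.sum_congr rfl fun x _ => ?_
        rw [Finset.sum_comm]
        refine Finset.sum_congr rfl fun y _ => ?_
        rw [Finset.sum_mul]
    _ = 2 ^ n * ∑ x, g x ^ 2 := by
        simp only [sum_chi_mul_chi, ite_mul, zero_mul, Finset.sum_ite_eq, Finset.mem_univ,
          if_true, Finset.mul_sum, sq]

lemma mixture_sub_eq {n : ℕ} (a : (Fin n → Bool) × Bool → ℝ) (s : Finset (Fin n)) :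
    (((2 : ℝ) ^ (n + 1))⁻¹ * ∑ z, a z) - ((2 : ℝ) ^ n)⁻¹ * ∑ x, a (x, parity s x) =
      ((2 : ℝ) ^ n)⁻¹ * ∑ x, chi s x * ((a (x, true) - a (x, false)) / 2) := by
  have h : ((2 : ℝ) ^ (n + 1))⁻¹ * ∑ z, a z =
      ((2 : ℝ) ^ n)⁻¹ * ∑ x, (a (x, true) + a (x, false)) / 2 := by
    rw [Fintype.sum_prod_type, ← Finset.sum_div]
    simp only [Fintype.sum_bool]
    rw [pow_succ, mul_inv]
    ring
  rw [h, ← mul_sub, ← Finset.sum_sub_distrib]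
  congr 1
  refine Finset.sum_congr rfl fun x _ => ?_
  rw [chi_eq_parity]
  cases parity s x <;> simp <;> ring

/-- The pointwise form of the theorem, with `M` an upper bound for the values `a z`. -/
lemma sum_abs_le {n : ℕ} (a : (Fin n → Bool) × Bool → ℝ) (M : ℝ)
    (h0 : ∀ z, 0 ≤ a z) (hM : ∀ z, a z ≤ M) :
    ((2 : ℝ) ^ n)⁻¹ * ∑ s : Finset (Fin n),
      |(((2 : ℝ) ^ (n + 1))⁻¹ * ∑ z, a z) - ((2 : ℝ) ^ n)⁻¹ * ∑ x, a (x, parity s x)| ≤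
      (2 : ℝ) ^ (-(n : ℝ) / 2) * M := by
  have hM0 : 0 ≤ M := (h0 (fun _ => true, true)).trans (hM _)
  simp only [mixture_sub_eq]
  set g : (Fin n → Bool) → ℝ := fun x => (a (x, true) - a (x, false)) / 2 with hg
  have hp : (0 : ℝ) < 2 ^ n := by positivity
  have hgM : ∀ x, g x ^ 2 ≤ M ^ 2 := by
    intro x
    apply sq_le_sq'
    · have := h0 (x, true); have := hM (x, false); simp only [hg]; linarith
    · have := h0 (x, false); have := hM (x, true); simp only [hg]; linarith
  have hsum : ∑ x, g x ^ 2 ≤ 2 ^ n * M ^ 2 := by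
    refine (Finset.sum_le_sum fun x _ => hgM x).trans ?_
    simp
  have hcs : (∑ s : Finset (Fin n), |∑ x, chi s x * g x|) ^ 2 ≤
      2 ^ n * (2 ^ n * ∑ x, g x ^ 2) := by
    have h := sq_sum_le_card_mul_sum_sq (s := (Finset.univ : Finset (Finset (Fin n))))
      (f := fun s => |∑ x, chi s x * g x|)
    simpa [sq_abs, sum_sq_chi] using h
  have hr : ((2 : ℝ) ^ (-(n : ℝ) / 2)) ^ 2 = ((2 : ℝ) ^ n)⁻¹ := by
    rw [← Real.rpow_natCast, ← Real.rpow_mul (by norm_num)]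
    rw [show -(n : ℝ) / 2 * ((2 : ℕ) : ℝ) = -(n : ℝ) by push_cast; ring,
      Real.rpow_neg (by norm_num), Real.rpow_natCast]
  simp only [abs_mul, abs_of_pos (inv_pos.mpr hp), ← Finset.mul_sum]
  refine (pow_le_pow_iff_left₀ (by positivity) (by positivity) two_ne_zero).mp ?_
  rw [mul_pow, mul_pow, mul_pow, hr]
  calc (((2 : ℝ) ^ n)⁻¹) ^ 2 * ((((2 : ℝ) ^ n)⁻¹) ^ 2 *
        (∑ s : Finset (Fin n), |∑ x, chi s x * g x|) ^ 2)
      ≤ (((2 : ℝ) ^ n)⁻¹) ^ 2 * ((((2 : ℝ) ^ n)⁻¹) ^ 2 *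
        (2 ^ n * (2 ^ n * (2 ^ n * M ^ 2)))) := by
        gcongr
        exact hcs.trans (by gcongr)
    _ = ((2 : ℝ) ^ n)⁻¹ * M ^ 2 := by
        field_simp

theorem stmt12 (m n : ℕ) (hm : 0 < m) (hn : 0 < n)
    (f : (Fin n → Bool) × Bool → (Fin m → ℝ) → ℝ)
    (hmeas : ∀ z, Measurable (f z))
    (hnonneg : ∀ z w, 0 ≤ f z w)
    (hprob : ∀ z, ∫ w : Fin m → ℝ, f z w = 1)
    (hintmax : Integrable (fun w : Fin m → ℝ => ⨆ z : (Fin n → Bool) × Bool, f z w)) :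
    ((2 : ℝ) ^ n)⁻¹ * ∑ s : Finset (Fin n),
        (∫ w : Fin m → ℝ,
          |(((2 : ℝ) ^ (n + 1))⁻¹ * ∑ z : (Fin n → Bool) × Bool, f z w) -
            ((2 : ℝ) ^ n)⁻¹ * ∑ x : Fin n → Bool, f (x, parity s x) w|) ≤
      (2 : ℝ) ^ (-(n : ℝ) / 2) *
        ∫ w : Fin m → ℝ, ⨆ z : (Fin n → Bool) × Bool, f z w := by
  -- A non-integrable function has integral `0`, so `hprob` already forces integrability.
  have hint : ∀ z, Integrable (f z) := fun z =>
    Integrable.of_integral_ne_zero (by rw [hprob z]; exact one_ne_zero)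
  have hD : ∀ s : Finset (Fin n), Integrable (fun w : Fin m → ℝ =>
      |(((2 : ℝ) ^ (n + 1))⁻¹ * ∑ z : (Fin n → Bool) × Bool, f z w) -
        ((2 : ℝ) ^ n)⁻¹ * ∑ x : Fin n → Bool, f (x, parity s x) w|) := fun s =>
    (((integrable_finsetSum _ fun z _ => hint z).const_mul _).sub
      ((integrable_finsetSum _ fun x _ => hint (x, parity s x)).const_mul _)).abs
  rw [← integral_finsetSum _ fun s _ => hD s, ← integral_const_mul, ← integral_const_mul]
  refine integral_mono ((integrable_finsetSum _ fun s _ => hD s).const_mul _)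
    (hintmax.const_mul _) fun w => ?_
  exact sum_abs_le (fun z => f z w) _ (fun z => hnonneg z w)
    fun z => le_ciSup (f := fun z => f z w) (Set.finite_range _).bddAbove z
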